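/- arXiv:2203.14534 — 5 statements merged into one kernel-verified Lean document; each statement's English description precedes it below -/
import Mathlib

section
/- Let $G$ be a finite group of order $N$, let $p$ be a prime, and let $b_0 < b_1 < \cdots < b_r$ be nonnegative integers such that $p^{b_r}$ divides $N$. Let $P_{b_0}$ be a fixed subgroup of $G$ of order $p^{b_0}$. Then the number of ordered tuples $(P_{b_1}, P_{b_2}, \ldots, P_{b_r})$ of subgroups of $G$ such that $|P_{b_i}| = p^{b_i}$ for each $i$ and $P_{b_0} \subseteq P_{b_1} \subseteq \cdots \subseteq P_{b_r}$ is congruent to $1$ modulo $p$. -/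
theorem fcc_fib {X Y : Type*} [Finite X] [Finite Y] {p c : ℕ} (f : X → Y)
    (h : ∀ y, Nat.card {x // f x = y} ≡ c [MOD p]) : Nat.card X ≡ c * Nat.card Y [MOD p] := by
  classical
  have := Fintype.ofFinite Y
  rw [← Nat.card_congr (Equiv.sigmaFiberEquiv f), Nat.card_sigma]
  have : ∑ y : Y, Nat.card {x // f x = y} ≡ ∑ y : Y, c [MOD p] := by
    rw [← ZMod.natCast_eq_natCast_iff]
    push_cast
    refine Finset.sum_congr rfl fun y _ => ?_
    exact (ZMod.natCast_eq_natCast_iff _ _ _).2 (h y)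
  simpa [mul_comm] using this

theorem fcc_mckay {G : Type*} [Group G] [Finite G] (p : ℕ) [hp : Fact p.Prime]
    (hdvd : p ∣ Nat.card G) : p ∣ Nat.card {x : G // x ^ p = 1} := by
  classical
  have := Fintype.ofFinite G
  rw [Nat.card_eq_fintype_card] at hdvd
  have hp' : p - 1 ≠ 0 := mt tsub_eq_zero_iff_le.mp (not_le_of_gt hp.out.one_lt)
  have Scard : p ∣ Fintype.card (Equiv.Perm.vectorsProdEqOne G p) := by
    rw [Equiv.Perm.VectorsProdEqOne.card]
    exact hdvd.trans (dvd_pow (dvd_refl _) hp')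
  let σ : Function.End (Equiv.Perm.vectorsProdEqOne G p) := fun v => Equiv.Perm.VectorsProdEqOne.rotate v 1
  have hσ : ∀ k v, (σ ^ k) v = Equiv.Perm.VectorsProdEqOne.rotate v k := by
    intro k
    induction k with
    | zero => intro v; exact (Equiv.Perm.VectorsProdEqOne.rotate_zero v).symm
    | succ k ih =>
      intro v
      rw [pow_succ]
      change (σ ^ k) (σ v) = _
      rw [ih, Nat.add_comm k 1]
      exact Equiv.Perm.VectorsProdEqOne.rotate_rotate v 1 k
  have h1 : σ ^ p ^ 1 = 1 := by
    funext v
    rw [pow_one, hσ]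
    exact Equiv.Perm.VectorsProdEqOne.rotate_length v
  have h2 := Equiv.Perm.card_fixedPoints_modEq h1
  have h3 : p ∣ Fintype.card (Function.fixedPoints σ) :=
    (Nat.modEq_zero_iff_dvd).1 (h2.symm.trans (Nat.modEq_zero_iff_dvd.2 Scard))
  rw [← Nat.card_eq_fintype_card] at h3
  convert h3 using 1
  refine Nat.card_congr (Equiv.ofBijective (fun x => ⟨⟨List.Vector.replicate p x.1,
    (List.prod_replicate p x.1).trans x.2⟩, ?_⟩) ⟨?_, ?_⟩)
  · exact Subtype.ext (Subtype.ext (List.rotate_replicate x.1 p 1))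
  · intro x y h
    have := congrArg (fun z => z.1.1.1) h
    exact Subtype.ext (List.replicate_right_injective hp.out.ne_zero this)
  · rintro ⟨v, hv⟩
    obtain ⟨g, hg⟩ := List.rotate_one_eq_self_iff_eq_replicate.mp (Subtype.ext_iff.mp (Subtype.ext_iff.mp hv))
    have hl : v.1.1 = List.replicate p g := by
      have := v.1.2
      rw [this] at hg
      exact hg
    refine ⟨⟨g, ?_⟩, ?_⟩
    · rw [← List.prod_replicate, ← hl]; exact v.2
    · exact Subtype.ext (Subtype.ext (Subtype.ext hl.symm))

theorem fcc_prime {G : Type*} [Group G] [Finite G] (p : ℕ) [hp : Fact p.Prime]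
    (hdvd : p ∣ Nat.card G) : Nat.card {M : Subgroup G // Nat.card M = p} ≡ 1 [MOD p] := by
  classical
  have h0 := fcc_mckay p hdvd
  have h1 : Nat.card {x : G // x ^ p = 1} = Nat.card {x : G // orderOf x = p} + 1 := by
    have e : {x : G | x ^ p = 1} = insert 1 {x : G | orderOf x = p} := by
      ext x
      simp only [Set.mem_setOf_eq, Set.mem_insert_iff]
      rw [← orderOf_dvd_iff_pow_eq_one, Nat.dvd_prime hp.out, orderOf_eq_one_iff]
    have : Set.ncard {x : G | x ^ p = 1} = Set.ncard {x : G | orderOf x = p} + 1 := by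
      rw [e, Set.ncard_insert_of_notMem]
      simp [hp.out.ne_one.symm]
    exact this
  have h2 : Nat.card {x : G // orderOf x = p} ≡ (p - 1) * Nat.card {M : Subgroup G // Nat.card M = p} [MOD p] := by
    refine fcc_fib (fun x => ⟨Subgroup.zpowers x.1, by rw [Nat.card_zpowers, x.2]⟩) ?_
    rintro ⟨M, hM⟩
    have : Nat.card {x : M // x ≠ 1} = p - 1 := by
      have h := Set.ncard_compl ({1} : Set M)
      rw [Set.ncard_singleton, hM] at h
      exact h
    rw [← this]
    refine congrArg (· % p) (Nat.card_congr (Equiv.ofBijective (fun x => ⟨⟨x.1.1, ?_⟩, ?_⟩) ⟨?_, ?_⟩))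
    · have := congrArg Subtype.val x.2
      simp only at this
      exact this.le (Subgroup.mem_zpowers _)
    · intro h
      have h := congrArg Subtype.val h
      have h3 := x.1.2
      simp only [Subgroup.coe_one] at h
      rw [h, orderOf_one] at h3
      exact hp.out.ne_one h3.symm
    · intro x y h
      have := congrArg (fun z => z.1.1) h
      exact Subtype.ext (Subtype.ext this)
    · rintro ⟨⟨x, hx⟩, hx1⟩
      have ho : orderOf x = p := by
        have h4 : orderOf x ∣ p := by
          rw [← hM]; exact Subgroup.orderOf_dvd_natCard M hx
        rcases (Nat.dvd_prime hp.out).1 h4 with h | h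
        · exact absurd (Subtype.ext (orderOf_eq_one_iff.1 h)) hx1
        · exact h
      refine ⟨⟨⟨x, ho⟩, ?_⟩, rfl⟩
      refine Subtype.ext ?_
      refine Subgroup.eq_of_le_of_card_ge (by simpa using hx) ?_
      simp only
      rw [hM, Nat.card_zpowers, ho]
  rw [h1] at h0
  have h3 := (h2.add_right 1).symm.trans (Nat.modEq_zero_iff_dvd.2 h0)
  rw [← ZMod.natCast_eq_natCast_iff] at h3 ⊢
  push_cast [Nat.cast_sub hp.out.one_le] at h3
  rw [ZMod.natCast_self] at h3
  push_cast
  linear_combination -h3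

theorem fcc_step {G : Type*} [Group G] [Finite G] (p : ℕ) [hp : Fact p.Prime] (a : ℕ)
    (H : Subgroup G) (hH : Nat.card H = p ^ a) (hdvd : p ^ (a + 1) ∣ Nat.card G) :
    Nat.card {L : Subgroup G // H ≤ L ∧ Nat.card L = p ^ (a + 1)} ≡ 1 [MOD p] := by
  classical
  let N := Subgroup.normalizer (H : Set G)
  let H' := H.subgroupOf N
  have hHN : H ≤ N := Subgroup.le_normalizer
  have hN : p ∣ Nat.card (N ⧸ H') := Sylow.prime_dvd_card_quotient_normalizer hdvd hH
  have hcH' : Nat.card H' = p ^ a := by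
    rw [← hH]; exact Nat.card_congr (Subgroup.subgroupOfEquivOfLe hHN).toEquiv
  have hk : ∀ M : Subgroup (N ⧸ H'), Nat.card ((M.comap (QuotientGroup.mk' H')).map N.subtype) = p ^ a * Nat.card M := by
    intro M
    rw [Subgroup.card_subtype, ← hcH']
    exact QuotientGroup.card_preimage_mk H' (M : Set (N ⧸ H'))
  refine Nat.ModEq.trans (congrArg (· % p) ?_) (fcc_prime p hN)
  symm
  refine Nat.card_congr (Equiv.ofBijective (fun M => ⟨(M.1.comap (QuotientGroup.mk' H')).map N.subtype, ?_, ?_⟩) ⟨?_, ?_⟩)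
  · intro x hx
    refine ⟨⟨x, hHN hx⟩, ?_, rfl⟩
    have : QuotientGroup.mk' H' ⟨x, hHN hx⟩ = 1 := by
      rw [← MonoidHom.mem_ker, QuotientGroup.ker_mk']
      exact hx
    simp only [SetLike.mem_coe, Subgroup.mem_comap]
    rw [this]; exact one_mem _
  · rw [hk, M.2, pow_succ]
  · intro M M' h
    have := congrArg Subtype.val h
    simp only at this
    have := Subgroup.map_injective N.subtype_injective this
    exact Subtype.ext (Subgroup.comap_injective (QuotientGroup.mk'_surjective H') this)
  · rintro ⟨L, hHL, hL⟩
    have hidx : (H.subgroupOf L).index = p := by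
      have h := (H.subgroupOf L).card_mul_index
      rw [Nat.card_congr (Subgroup.subgroupOfEquivOfLe hHL).toEquiv, hH, hL, pow_succ] at h
      exact Nat.eq_of_mul_eq_mul_left (pow_pos hp.out.pos a) h
    have hnorm : (H.subgroupOf L).Normal := by
      apply Subgroup.normal_of_index_eq_minFac_card
      rw [hidx, hL, Nat.pow_minFac (by omega), hp.out.minFac_eq]
    have hLN : L ≤ N := (Subgroup.normal_subgroupOf_iff_le_normalizer hHL).1 hnorm
    have key : (((L.subgroupOf N).map (QuotientGroup.mk' H')).comap (QuotientGroup.mk' H')).map N.subtype = L := by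
      rw [Subgroup.comap_map_eq, QuotientGroup.ker_mk', sup_eq_left.2, Subgroup.subgroupOf_map_subtype, inf_eq_left.2 hLN]
      exact Subgroup.comap_mono hHL
    refine ⟨⟨(L.subgroupOf N).map (QuotientGroup.mk' H'), ?_⟩, Subtype.ext key⟩
    have h := hk ((L.subgroupOf N).map (QuotientGroup.mk' H'))
    rw [key, hL, pow_succ] at h
    exact (Nat.eq_of_mul_eq_mul_left (pow_pos hp.out.pos a) h).symm

theorem fcc_rel {G : Type*} [Group G] [Finite G] (p : ℕ) [hp : Fact p.Prime] (a : ℕ)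
    (H K : Subgroup G) (hHK : H ≤ K) (hH : Nat.card H = p ^ a) (hdvd : p ^ (a + 1) ∣ Nat.card K) :
    Nat.card {L : Subgroup G // (H ≤ L ∧ Nat.card L = p ^ (a + 1)) ∧ L ≤ K} ≡ 1 [MOD p] := by
  have h := fcc_step p a (H.subgroupOf K)
    ((Nat.card_congr (Subgroup.subgroupOfEquivOfLe hHK).toEquiv).trans hH) hdvd
  refine Nat.ModEq.trans (congrArg (· % p) ?_) h
  symm
  refine Nat.card_congr (Equiv.ofBijective (fun M => ⟨M.1.map K.subtype, ⟨?_, ?_⟩, ?_⟩) ⟨?_, ?_⟩)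
  · intro x hx
    exact ⟨⟨x, hHK hx⟩, M.2.1 hx, rfl⟩
  · rw [Subgroup.card_subtype, M.2.2]
  · exact Subgroup.map_subtype_le _
  · intro M M' h
    have := congrArg Subtype.val h
    exact Subtype.ext (Subgroup.map_injective K.subtype_injective this)
  · rintro ⟨L, ⟨hHL, hL⟩, hLK⟩
    refine ⟨⟨L.subgroupOf K, Subgroup.comap_mono hHL, ?_⟩, Subtype.ext ?_⟩
    · rw [Nat.card_congr (Subgroup.subgroupOfEquivOfLe hLK).toEquiv, hL]
    · simp only
      rw [Subgroup.subgroupOf_map_subtype, inf_eq_left.2 hLK]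

theorem fcc_two {G : Type*} [Group G] [Finite G] (p : ℕ) [hp : Fact p.Prime] (d : ℕ) : ∀ (a : ℕ)
    (H : Subgroup G) (_ : Nat.card H = p ^ a) (_ : p ^ (a + d) ∣ Nat.card G),
    Nat.card {K : Subgroup G // H ≤ K ∧ Nat.card K = p ^ (a + d)} ≡ 1 [MOD p] := by
  induction d with
  | zero =>
    intro a H hH _
    have : Nat.card {K : Subgroup G // H ≤ K ∧ Nat.card K = p ^ (a + 0)} = 1 := by
      rw [Nat.card_eq_one_iff_unique]
      refine ⟨⟨?_⟩, ⟨⟨H, le_rfl, hH⟩⟩⟩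
      have : ∀ x : {K : Subgroup G // H ≤ K ∧ Nat.card K = p ^ (a + 0)}, H = x.1 := fun x =>
        Subgroup.eq_of_le_of_card_ge x.2.1 (by rw [x.2.2, hH]; simp)
      intro x y
      exact Subtype.ext ((this x).symm.trans (this y))
    rw [this]
  | succ d ih =>
    intro a H hH hdvd
    let X := {q : Subgroup G × Subgroup G // (H ≤ q.1 ∧ Nat.card q.1 = p ^ (a + 1)) ∧
      q.1 ≤ q.2 ∧ Nat.card q.2 = p ^ (a + (d + 1))}
    have e1 : Nat.card X ≡ 1 * Nat.card {L : Subgroup G // H ≤ L ∧ Nat.card L = p ^ (a + 1)} [MOD p] := by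
      refine fcc_fib (fun q => ⟨q.1.1, q.2.1⟩) ?_
      rintro ⟨L, hHL, hL⟩
      have heq : a + (d + 1) = a + 1 + d := by omega
      refine Nat.ModEq.trans (congrArg (· % p) ?_) (ih (a + 1) L hL (by rwa [← heq]))
      symm
      refine Nat.card_congr (Equiv.ofBijective (fun K => ⟨⟨(L, K.1), ⟨hHL, hL⟩, K.2.1, by rw [heq]; exact K.2.2⟩, rfl⟩) ⟨?_, ?_⟩)
      · intro K K' h
        exact Subtype.ext (congrArg (fun z => z.1.1.2) h)
      · rintro ⟨⟨⟨L', K⟩, h1, h2, h3⟩, h4⟩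
        obtain rfl : L' = L := congrArg Subtype.val h4
        exact ⟨⟨K, h2, by rw [← heq]; exact h3⟩, rfl⟩
    have e2 : Nat.card X ≡ 1 * Nat.card {K : Subgroup G // H ≤ K ∧ Nat.card K = p ^ (a + (d + 1))} [MOD p] := by
      refine fcc_fib (fun q => ⟨q.1.2, q.2.1.1.trans q.2.2.1, q.2.2.2⟩) ?_
      rintro ⟨K, hHK, hK⟩
      refine Nat.ModEq.trans (congrArg (· % p) ?_) (fcc_rel p a H K hHK hH
        (by rw [hK]; exact pow_dvd_pow p (by omega)))
      symm
      refine Nat.card_congr (Equiv.ofBijective (fun L => ⟨⟨(L.1, K), L.2.1, L.2.2, hK⟩, rfl⟩) ⟨?_, ?_⟩)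
      · intro K K' h
        exact Subtype.ext (congrArg (fun z => z.1.1.1) h)
      · rintro ⟨⟨⟨L, K'⟩, h1, h2, h3⟩, h4⟩
        obtain rfl : K' = K := congrArg Subtype.val h4
        exact ⟨⟨L, h1, h2⟩, rfl⟩
    rw [one_mul] at e1 e2
    exact e2.symm.trans (e1.trans (fcc_step p a H hH ((pow_dvd_pow p (by omega)).trans hdvd)))

/-- Let `G` be a finite group of order `N`, `p` a prime, and `b 0 < b 1 < ⋯ < b r`
nonnegative integers with `p ^ b r ∣ N`. Given a fixed subgroup `P₀` of order `p ^ b 0`,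
the number of ordered tuples `(P 0, …, P (r-1))` of subgroups of `G` (corresponding to
`P_{b_1}, …, P_{b_r}`) with `Nat.card (P i) = p ^ b (i+1)` forming an ascending chain above
`P₀` is congruent to `1` mod `p`. -/
theorem frobenius_chain_count {G : Type*} [Group G] [Fintype G] (p : ℕ) (hp : p.Prime)
    (r : ℕ) (b : Fin (r + 1) → ℕ) (hb : StrictMono b)
    (hdvd : p ^ b (Fin.last r) ∣ Fintype.card G)
    (P₀ : Subgroup G) (hP₀ : Nat.card P₀ = p ^ b 0) :
    Nat.card {P : Fin r → Subgroup G //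
        Monotone P ∧ (∀ i : Fin r, Nat.card (P i) = p ^ b i.succ) ∧ ∀ i : Fin r, P₀ ≤ P i}
      ≡ 1 [MOD p] := by
  haveI : Fact p.Prime := ⟨hp⟩
  induction r generalizing P₀ with
  | zero =>
    have : Nat.card {P : Fin 0 → Subgroup G //
        Monotone P ∧ (∀ i : Fin 0, Nat.card (P i) = p ^ b i.succ) ∧ ∀ i : Fin 0, P₀ ≤ P i} = 1 := by
      rw [Nat.card_eq_one_iff_unique]
      exact ⟨⟨fun x y => Subtype.ext (funext fun i => i.elim0)⟩,
        ⟨⟨fun i => i.elim0, fun i => i.elim0, fun i => i.elim0, fun i => i.elim0⟩⟩⟩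
    rw [this]
  | succ r ih =>
    obtain ⟨d, hd⟩ : ∃ d, b 1 = b 0 + d := Nat.exists_eq_add_of_le (hb.monotone (Fin.zero_le 1))
    have h2 := fcc_two p d (b 0) P₀ hP₀ (by
      rw [← hd, Nat.card_eq_fintype_card]
      exact (pow_dvd_pow p (hb.monotone (Fin.le_last 1))).trans hdvd)
    rw [← hd] at h2
    refine Nat.ModEq.trans ?_ h2
    rw [← one_mul (Nat.card {K : Subgroup G // P₀ ≤ K ∧ Nat.card K = p ^ b 1})]
    refine fcc_fib (fun P => ⟨P.1 0, P.2.2.2 0, P.2.2.1 0⟩) ?_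
    rintro ⟨L, hPL, hL⟩
    refine Nat.ModEq.trans (congrArg (· % p) ?_) (ih (fun i => b i.succ)
      (hb.comp (Fin.strictMono_succ)) hdvd L hL)
    symm
    refine Nat.card_congr (Equiv.ofBijective (fun P => ⟨⟨Fin.cons L P.1, ?_, ?_, ?_⟩, rfl⟩) ⟨?_, ?_⟩)
    · intro i j hij
      induction i using Fin.cases with
      | zero =>
        induction j using Fin.cases with
        | zero => exact le_rfl
        | succ j => simpa using P.2.2.2 j
      | succ i =>
        induction j using Fin.cases with
        | zero => exact absurd hij (by simp)
        | succ j => simpa using P.2.1 (Fin.succ_le_succ_iff.1 hij)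
    · intro i
      induction i using Fin.cases with
      | zero => exact hL
      | succ i => simpa using P.2.2.1 i
    · intro i
      induction i using Fin.cases with
      | zero => exact hPL
      | succ i => simpa using hPL.trans (P.2.2.2 i)
    · intro P Q h
      exact Subtype.ext (Fin.cons_right_injective (α := fun _ => Subgroup G) L
        (congrArg (fun z => z.1.1) h))
    · rintro ⟨⟨P, h1, h2, h3⟩, h4⟩
      obtain rfl : P 0 = L := congrArg Subtype.val h4
      exact ⟨⟨Fin.tail P, fun i j hij => h1 (Fin.succ_le_succ_iff.2 hij), fun i => h2 i.succ,
        fun i => h1 (Fin.zero_le _)⟩, Subtype.ext (Subtype.ext (Fin.cons_self_tail P))⟩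
end

section
/- (Snapper's theorem) Let $G$ be a finite group, $p$ a prime, and $r \le s$ nonnegative integers such that $p^s$ divides the order of $G$. Let $K$ be a subgroup of $G$ of order $p^r$. Then the number of subgroups of $G$ of order $p^s$ containing $K$ is congruent to $1$ modulo $p$. -/
lemma snap_roots {L : Type*} [Group L] [Finite L] (p : ℕ) [hp : Fact p.Prime]
    (h : p ∣ Nat.card L) : p ∣ Nat.card {x : L // x ^ p = 1} := by
  obtain ⟨c, hc⟩ := exists_prime_orderOf_dvd_card' p h
  have hC : IsPGroup p (Subgroup.zpowers c) := IsPGroup.of_card (n := 1) (by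
    rw [Nat.card_zpowers, hc, pow_one])
  have hcp : c ^ p = 1 := by rw [← hc]; exact pow_orderOf_eq_one c
  have hc1 : c ≠ 1 := by
    rintro rfl
    rw [orderOf_one] at hc
    exact hp.out.one_lt.ne hc
  let act1 : MulAction (Subgroup.zpowers c) {x : L // x ^ p = 1} :=
    { smul := fun g x => ⟨g * x.1 * (g : L)⁻¹, by rw [conj_pow, x.2]; simp⟩
      one_smul := fun x => Subtype.ext (by change ((1 : Subgroup.zpowers c) : L) * x.1 * ((1 : Subgroup.zpowers c) : L)⁻¹ = x.1; simp)
      mul_smul := fun a b x => Subtype.ext (by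
        change ((a * b : Subgroup.zpowers c) : L) * x.1 * ((a * b : Subgroup.zpowers c) : L)⁻¹ = a * (b * x.1 * (b : L)⁻¹) * (a : L)⁻¹
        simp [mul_assoc]) }
  have h1 := hC.card_modEq_card_fixedPoints {x : L // x ^ p = 1}
  let F := {x : L // x ^ p = 1 ∧ Commute c x}
  have e : Nat.card (MulAction.fixedPoints (Subgroup.zpowers c) {x : L // x ^ p = 1}) = Nat.card F := by
    refine Nat.card_congr
      { toFun := fun x => ⟨x.1.1, x.1.2, ?_⟩
        invFun := fun x => ⟨⟨x.1, x.2.1⟩, ?_⟩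
        left_inv := fun _ => rfl
        right_inv := fun _ => rfl }
    · have := congrArg Subtype.val (x.2 ⟨c, Subgroup.mem_zpowers c⟩)
      change c * x.1.1 * c⁻¹ = x.1.1 at this
      exact mul_inv_eq_iff_eq_mul.1 this
    · rintro ⟨g, k, rfl⟩
      apply Subtype.ext
      change c ^ k * x.1 * (c ^ k)⁻¹ = x.1
      exact mul_inv_eq_iff_eq_mul.2 (x.2.2.zpow_left k)
  have hz : ∀ g : Subgroup.zpowers c, (g : L) ^ p = 1 ∧ Commute c (g : L) := by
    rintro ⟨g, k, rfl⟩
    refine ⟨?_, (Commute.refl c).zpow_right k⟩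
    change (c ^ k) ^ p = 1
    rw [← zpow_natCast, ← zpow_mul, mul_comm, zpow_mul, zpow_natCast, hcp, one_zpow]
  have hz2 : ∀ (g : Subgroup.zpowers c) (x : F), Commute (g : L) x.1 := by
    rintro ⟨g, k, rfl⟩ x
    exact x.2.2.zpow_left k
  let act2 : MulAction (Subgroup.zpowers c) F :=
    { smul := fun g x => ⟨g * x.1, by
        rw [(hz2 g x).mul_pow, x.2.1, (hz g).1, one_mul], (hz g).2.mul_right x.2.2⟩
      one_smul := fun x => Subtype.ext (one_mul x.1)
      mul_smul := fun a b x => Subtype.ext (mul_assoc (a : L) b x.1) }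
  have h2 := hC.card_modEq_card_fixedPoints F
  have e2 : Nat.card (MulAction.fixedPoints (Subgroup.zpowers c) F) = 0 := by
    rw [Nat.card_eq_zero]
    left
    refine ⟨fun x => hc1 ?_⟩
    have := congrArg Subtype.val (x.2 ⟨c, Subgroup.mem_zpowers c⟩)
    change c * x.1.1 = x.1.1 at this
    simpa using this
  rw [e2] at h2
  rw [e] at h1
  exact (Nat.modEq_zero_iff_dvd).1 (h1.trans h2)

lemma snap_prime {L : Type*} [Group L] [Finite L] (p : ℕ) [hp : Fact p.Prime]
    (h : p ∣ Nat.card L) : Nat.card {Q : Subgroup L // Nat.card Q = p} ≡ 1 [MOD p] := by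
  have h0 := snap_roots p h
  have e : Nat.card {x : L // x ^ p = 1} =
      1 + Nat.card {Q : Subgroup L // Nat.card Q = p} * (p - 1) := by
    have e1 : Nat.card {x : L // x ^ p = 1} = 1 + Nat.card {x : L // orderOf x = p} := by
      rw [← Nat.card_unique (α := Unit), ← Nat.card_sum]
      refine (Nat.card_congr (Equiv.ofBijective
        (Sum.elim (fun _ => ⟨1, one_pow p⟩) (fun x => ⟨x.1, by
          have := pow_orderOf_eq_one x.1
          rwa [x.2] at this⟩)) ⟨?_, ?_⟩)).symm
      · rintro (a | a) (b | b) hab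
        · rfl
        · have := congrArg Subtype.val hab
          have hb := b.2
          simp at this
          rw [← this, orderOf_one] at hb
          exact absurd hb hp.out.one_lt.ne
        · have := congrArg Subtype.val hab
          have hb := a.2
          simp at this
          rw [this, orderOf_one] at hb
          exact absurd hb hp.out.one_lt.ne
        · have := congrArg Subtype.val hab
          simp at this
          rw [Subtype.ext this]
      · rintro ⟨x, hx⟩
        by_cases hx1 : x = 1
        · exact ⟨Sum.inl (), Subtype.ext hx1.symm⟩
        · exact ⟨Sum.inr ⟨x, orderOf_eq_prime hx hx1⟩, rfl⟩
    rw [e1]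
    congr 1
    let f : {x : L // orderOf x = p} → {Q : Subgroup L // Nat.card Q = p} :=
      fun x => ⟨Subgroup.zpowers x.1, by rw [Nat.card_zpowers, x.2]⟩
    have := Fintype.ofFinite {Q : Subgroup L // Nat.card Q = p}
    rw [← Nat.card_congr (Equiv.sigmaFiberEquiv f), Nat.card_sigma]
    have key : ∀ Q, Nat.card {x // f x = Q} = p - 1 := by
      intro Q
      have e2 : Nat.card {x // f x = Q} = Nat.card {y : Q.1 // y ≠ 1} := by
        refine Nat.card_congr
          { toFun := fun x => ⟨⟨x.1.1, ?_⟩, ?_⟩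
            invFun := fun y => ⟨⟨y.1.1, ?_⟩, ?_⟩
            left_inv := fun _ => rfl
            right_inv := fun _ => rfl }
        · have := congrArg Subtype.val x.2
          rw [← this]
          exact Subgroup.mem_zpowers _
        · intro h1
          have h1 := congrArg Subtype.val h1
          have h2 := x.1.2
          simp at h1
          rw [h1, orderOf_one] at h2
          exact hp.out.one_lt.ne h2
        · have hy : y.1 ^ p = 1 := by
            have := pow_card_eq_one' (x := y.1)
            rwa [Q.2] at this
          have := orderOf_eq_prime hy y.2
          rwa [← Subgroup.orderOf_coe] at this
        · apply Subtype.ext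
          apply Subgroup.eq_of_le_of_card_ge
          · simp [f]
          · exact le_of_eq (Q.2.trans (f _).2.symm)
      rw [e2]
      have : Fintype Q.1 := Fintype.ofFinite _
      classical
      rw [Nat.card_eq_fintype_card, Fintype.card_subtype_compl, Fintype.card_subtype_eq, ← Nat.card_eq_fintype_card, Q.2]
    simp [key]
  rw [e] at h0
  generalize Nat.card {Q : Subgroup L // Nat.card Q = p} = k at *
  have hp1 := hp.out.one_lt
  obtain ⟨q, rfl⟩ : ∃ q, p = q + 1 := ⟨p - 1, by omega⟩
  have h3 : k ≡ k + (1 + k * (q + 1 - 1)) [MOD (q+1)] := by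
    simpa using (Nat.ModEq.refl k).add ((Nat.modEq_zero_iff_dvd).2 h0).symm
  refine h3.trans ?_
  have : k + (1 + k * (q + 1 - 1)) = 1 + (q+1) * k := by simp; ring
  rw [this]
  simp [Nat.ModEq]

lemma snap_base {G : Type*} [Group G] [Finite G] (p r : ℕ) [hp : Fact p.Prime]
    (hdvd : p ^ (r + 1) ∣ Nat.card G) (K : Subgroup G) (hK : Nat.card K = p ^ r) :
    Nat.card {Q : Subgroup G // Nat.card Q = p ^ (r + 1) ∧ K ≤ Q} ≡ 1 [MOD p] := by
  set N := Subgroup.normalizer (K : Set G) with hN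
  have hKN : K ≤ N := Subgroup.le_normalizer
  let K' := K.subgroupOf N
  have hK' : Nat.card K' = p ^ r := by
    rw [← hK]; exact Nat.card_congr (Subgroup.subgroupOfEquivOfLe hKN).toEquiv
  have hd : p ∣ Nat.card (N ⧸ K') := by
    have h1 := Sylow.prime_pow_dvd_card_normalizer hdvd hK
    rw [Subgroup.card_eq_card_quotient_mul_card_subgroup K', hK', pow_succ', ] at h1
    exact Nat.dvd_of_mul_dvd_mul_right (pow_pos hp.out.pos r) h1
  have hsurj : Function.Surjective (QuotientGroup.mk' K') := QuotientGroup.mk'_surjective K'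
  let f : Subgroup (N ⧸ K') → Subgroup G :=
    fun Q => (Q.comap (QuotientGroup.mk' K')).map N.subtype
  have hcard : ∀ Q, Nat.card (f Q) = Nat.card Q * p ^ r := by
    intro Q
    have h1 : Nat.card (f Q) = Nat.card (Q.comap (QuotientGroup.mk' K')) :=
      Subgroup.card_map_of_injective N.subtype_injective
    have h2 := Subgroup.card_mul_index (Q.comap (QuotientGroup.mk' K'))
    rw [Subgroup.index_comap_of_surjective _ hsurj,
      Subgroup.card_eq_card_quotient_mul_card_subgroup K', hK', ← Subgroup.card_mul_index Q] at h2
    have h3 : Q.index ≠ 0 := Subgroup.index_ne_zero_of_finite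
    rw [h1]
    apply Nat.eq_of_mul_eq_mul_right (Nat.pos_of_ne_zero h3)
    rw [h2]; ring
  have hKf : ∀ Q, K ≤ f Q := by
    intro Q x hx
    refine ⟨⟨x, hKN hx⟩, ?_, rfl⟩
    have : (QuotientGroup.mk' K') ⟨x, hKN hx⟩ = 1 := by
      rw [QuotientGroup.mk'_apply, QuotientGroup.eq_one_iff]
      exact hx
    change (QuotientGroup.mk' K') ⟨x, hKN hx⟩ ∈ Q
    rw [this]
    exact Q.one_mem
  have hinj : Function.Injective f := fun A B hAB =>
    Subgroup.comap_injective hsurj (Subgroup.map_injective N.subtype_injective hAB)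
  have hpr : 0 < p ^ r := pow_pos hp.out.pos r
  have hcc : Nat.card {Q : Subgroup (N ⧸ K') // Nat.card Q = p} =
      Nat.card {Q : Subgroup G // Nat.card Q = p ^ (r + 1) ∧ K ≤ Q} := by
    refine Nat.card_congr (Equiv.ofBijective
      (fun Q => ⟨f Q.1, by rw [hcard, Q.2, pow_succ'], hKf _⟩) ⟨?_, ?_⟩)
    · intro A B hAB
      exact Subtype.ext (hinj (congrArg Subtype.val hAB))
    · rintro ⟨H, hH, hKH⟩
      have hHN : H ≤ N := by
        rw [← Subgroup.normal_subgroupOf_iff_le_normalizer hKH, ← Subgroup.normalizer_eq_top_iff]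
        have hk : Nat.card (K.subgroupOf H) = p ^ r := by
          rw [← hK]; exact Nat.card_congr (Subgroup.subgroupOfEquivOfLe hKH).toEquiv
        have := Sylow.prime_pow_dvd_card_normalizer (p := p) (n := r) (by rw [hH]) hk
        apply Subgroup.eq_top_of_le_card
        rw [hH]
        exact Nat.le_of_dvd Nat.card_pos this
      have hfH : f ((H.subgroupOf N).map (QuotientGroup.mk' K')) = H := by
        change (Subgroup.comap (QuotientGroup.mk' K') (Subgroup.map (QuotientGroup.mk' K') (H.subgroupOf N))).map N.subtype = H
        rw [Subgroup.comap_map_eq_self, Subgroup.subgroupOf_map_subtype, inf_eq_left.2 hHN]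
        rw [QuotientGroup.ker_mk']
        exact fun x hx => hKH hx
      refine ⟨⟨(H.subgroupOf N).map (QuotientGroup.mk' K'), ?_⟩, Subtype.ext hfH⟩
      have h4 := hcard ((H.subgroupOf N).map (QuotientGroup.mk' K'))
      rw [hfH, hH, pow_succ'] at h4
      exact (Nat.eq_of_mul_eq_mul_right hpr h4).symm
  rw [← hcc]
  exact snap_prime p hd

lemma snap_sum {α : Type*} [Finite α] (p : ℕ) (β : α → Type*) [∀ a, Finite (β a)]
    (h : ∀ a, Nat.card (β a) ≡ 1 [MOD p]) : Nat.card (Σ a, β a) ≡ Nat.card α [MOD p] := by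
  have := Fintype.ofFinite α
  rw [Nat.card_sigma, Nat.card_eq_fintype_card, ← Finset.card_univ, Finset.card_eq_sum_ones]
  exact Nat.ModEq.sum (fun a _ => h a)

lemma snap_main {G : Type*} [Group G] [Finite G] (p : ℕ) [hp : Fact p.Prime] (d : ℕ) :
    ∀ (r : ℕ) (_ : p ^ (r + d) ∣ Nat.card G) (K : Subgroup G) (_ : Nat.card K = p ^ r),
    Nat.card {Q : Subgroup G // Nat.card Q = p ^ (r + d) ∧ K ≤ Q} ≡ 1 [MOD p] := by
  induction d with
  | zero =>
    intro r hd K hK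
    have : Nat.card {Q : Subgroup G // Nat.card Q = p ^ (r + 0) ∧ K ≤ Q} = 1 := by
      rw [Nat.card_eq_one_iff_unique]
      refine ⟨⟨?_⟩, ⟨⟨K, hK, le_rfl⟩⟩⟩
      have : ∀ Q : {Q : Subgroup G // Nat.card Q = p ^ (r + 0) ∧ K ≤ Q}, K = Q.1 := by
        intro Q
        apply Subgroup.eq_of_le_of_card_ge Q.2.2
        rw [Q.2.1, hK, add_zero]
      intro A B
      exact Subtype.ext ((this A).symm.trans (this B))
    rw [this]
  | succ d ih =>
    intro r hd K hK
    have hd1 : p ^ (r + 1) ∣ Nat.card G := (pow_dvd_pow p (by omega)).trans hd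
    let α := {H : Subgroup G // Nat.card H = p ^ (r + 1) ∧ K ≤ H}
    let γ := {Q : Subgroup G // Nat.card Q = p ^ (r + (d + 1)) ∧ K ≤ Q}
    have h1 := snap_sum (α := α) p
      (fun H => {Q : Subgroup G // Nat.card Q = p ^ (r + 1 + d) ∧ H.1 ≤ Q})
      (fun H => ih (r + 1) (by convert hd using 2; ring) H.1 H.2.1)
    have h2 := snap_sum (α := γ) p
      (fun Q => {H : Subgroup G // Nat.card H = p ^ (r + 1) ∧ K ≤ H ∧ H ≤ Q.1}) (by
        intro Q
        have hk : Nat.card (K.subgroupOf Q.1) = p ^ r := by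
          rw [← hK]; exact Nat.card_congr (Subgroup.subgroupOfEquivOfLe Q.2.2).toEquiv
        have h3 := snap_base p r (G := Q.1)
          (by rw [Q.2.1]; exact pow_dvd_pow p (by omega)) (K.subgroupOf Q.1) hk
        convert h3 using 1
        refine Nat.card_congr
          { toFun := fun H => ⟨H.1.subgroupOf Q.1, ?_, ?_⟩
            invFun := fun H => ⟨H.1.map Q.1.subtype, ?_, ?_, ?_⟩
            left_inv := fun H => Subtype.ext ?_
            right_inv := fun H => Subtype.ext ?_ }
        · exact (Nat.card_congr (Subgroup.subgroupOfEquivOfLe H.2.2.2).toEquiv).trans H.2.1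
        · exact fun x hx => H.2.2.1 hx
        · exact (Subgroup.card_map_of_injective Q.1.subtype_injective).trans H.2.1
        · exact fun x hx => ⟨⟨x, Q.2.2 hx⟩, H.2.2 hx, rfl⟩
        · exact Subgroup.map_subtype_le _
        · change (H.1.subgroupOf Q.1).map Q.1.subtype = H.1
          rw [Subgroup.subgroupOf_map_subtype, inf_eq_left.2 H.2.2.2]
        · change (H.1.map Q.1.subtype).subgroupOf Q.1 = H.1
          exact Subgroup.comap_map_eq_self_of_injective Q.1.subtype_injective _)
    refine h2.symm.trans (Nat.ModEq.trans ?_ (h1.trans (snap_base p r hd1 K hK)))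
    have hs : r + 1 + d = r + (d + 1) := by ring
    apply congrArg (· % p)
    exact Nat.card_congr
      { toFun := fun x => ⟨⟨x.2.1, x.2.2.1, x.2.2.2.1⟩, ⟨x.1.1, by rw [hs]; exact x.1.2.1, x.2.2.2.2⟩⟩
        invFun := fun x => ⟨⟨x.2.1, by rw [← hs]; exact x.2.2.1, x.1.2.2.trans x.2.2.2⟩,
          ⟨x.1.1, x.1.2.1, x.1.2.2, x.2.2.2⟩⟩
        left_inv := fun _ => rfl
        right_inv := fun _ => rfl }

/-- Snapper's theorem: if `p ^ s ∣ |G|`, `r ≤ s` and `K ≤ G` has order `p ^ r`, then the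
number of subgroups of `G` of order `p ^ s` containing `K` is congruent to `1` mod `p`. -/
theorem snapper {G : Type*} [Group G] [Fintype G] (p r s : ℕ) (hp : p.Prime)
    (hrs : r ≤ s) (hdvd : p ^ s ∣ Fintype.card G)
    (K : Subgroup G) (hK : Nat.card K = p ^ r) :
    Nat.card {Q : Subgroup G // Nat.card Q = p ^ s ∧ K ≤ Q} ≡ 1 [MOD p] := by
  have : Fact p.Prime := ⟨hp⟩
  obtain ⟨d, rfl⟩ := Nat.exists_eq_add_of_le hrs
  exact snap_main p d r (by rwa [Nat.card_eq_fintype_card]) K hK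
end

section
/- (Frobenius' theorem) Let $G$ be a finite group of order $N$, let $p$ be a prime, and let $r$ be a nonnegative integer such that $p^r$ divides $N$. Then the number of subgroups of $G$ of order $p^r$ is congruent to $1$ modulo $p$. -/
open MulAction Pointwise

theorem frob_dvd_card {G X : Type*} [Group G] [MulAction G X] [Finite X] (d : ℕ)
    (h : ∀ x : X, d ∣ (stabilizer G x).index) : d ∣ Nat.card X := by
  classical
  have := Fintype.ofFinite (orbitRel.Quotient G X)
  have e := Nat.card_congr (selfEquivSigmaOrbits' G X)
  have : ∀ ω : orbitRel.Quotient G X, Finite ω.orbit := fun ω => inferInstance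
  rw [e, Nat.card_sigma]
  refine Finset.dvd_sum fun ω _ => ?_
  induction ω using Quotient.inductionOn' with
  | h x =>
    have := h x
    rw [index_stabilizer] at this
    exact this

theorem frob_choose (p m : ℕ) (hp : p.Prime) (hm : 0 < m) (r : ℕ) :
    (p ^ r * m - 1).choose (p ^ r - 1) ≡ 1 [MOD p] := by
  have := Fact.mk hp
  induction r with
  | zero => simp; rfl
  | succ r ih =>
    have key : ∀ t, 0 < t → (p * t - 1) % p = p - 1 ∧ (p * t - 1) / p = t - 1 := by
      intro t ht
      obtain ⟨s, rfl⟩ : ∃ s, t = s + 1 := ⟨t - 1, by omega⟩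
      have h1 : p * (s + 1) - 1 = (p - 1) + p * s := by
        have := hp.pos
        rw [mul_add]; omega
      have h2 : p - 1 < p := by have := hp.pos; omega
      rw [h1, Nat.add_mul_mod_self_left, Nat.add_mul_div_left _ _ hp.pos]
      simp [Nat.mod_eq_of_lt h2, Nat.div_eq_of_lt h2]
    have hq : 0 < p ^ r := pow_pos hp.pos r
    have h := Choose.choose_modEq_choose_mod_mul_choose_div_nat (n := p * (p ^ r * m) - 1)
      (k := p * p ^ r - 1) (p := p)
    rw [(key _ (Nat.mul_pos hq hm)).1, (key _ (Nat.mul_pos hq hm)).2, (key _ hq).1, (key _ hq).2,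
      Nat.choose_self, one_mul] at h
    rw [pow_succ', mul_assoc]
    exact h.trans ih

theorem frob_choose' (p m : ℕ) (hp : p.Prime) (hm : 0 < m) (r : ℕ) :
    (p ^ r * m).choose (p ^ r) ≡ m [MOD (m * p)] := by
  have hq : 0 < p ^ r := pow_pos hp.pos r
  have h1 : (p ^ r * m).choose (p ^ r) = m * (p ^ r * m - 1).choose (p ^ r - 1) := by
    have h := Nat.add_one_mul_choose_eq (p ^ r * m - 1) (p ^ r - 1)
    rw [Nat.sub_add_cancel (Nat.mul_pos hq hm), Nat.sub_add_cancel hq] at h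
    apply Nat.eq_of_mul_eq_mul_left hq
    linarith
  rw [h1]
  simpa using (frob_choose p m hp hm r).mul_left' m

theorem frob_stab_dvd {G : Type*} [Group G] [Finite G] [DecidableEq G] (A : Finset G) :
    Nat.card (stabilizer G A) ∣ A.card := by
  let Y : SubMulAction (stabilizer G A) G :=
    { carrier := A
      smul_mem' := fun c x hx => (mem_stabilizer_finset.1 c.2 x).2 hx }
  have := frob_dvd_card (G := stabilizer G A) (X := Y) (Nat.card (stabilizer G A)) (by
    intro y
    have : stabilizer (stabilizer G A) y = ⊥ := by
      rw [eq_bot_iff]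
      intro c hc
      have h := congrArg Subtype.val (mem_stabilizer_iff.1 hc)
      have h2 : (c : G) * (y : G) = y := h
      simpa using h2
    rw [this, Subgroup.index_bot])
  have e : Nat.card Y = A.card := by
    change Nat.card (A : Set G) = A.card
    rw [Nat.card_coe_set_eq, Set.ncard_coe_finset]
  rwa [e] at this

theorem frob_bad {G : Type*} [Group G] [Finite G] [DecidableEq G] (p r m : ℕ) (hp : p.Prime)
    (hc : Nat.card G = p ^ r * m) :
    m * p ∣ Nat.card {A : Finset G // A.card = p ^ r ∧ Nat.card (stabilizer G A) ≠ p ^ r} := by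
  let Y : SubMulAction G (Finset G) :=
    { carrier := {A | A.card = p ^ r ∧ Nat.card (stabilizer G A) ≠ p ^ r}
      smul_mem' := fun c x hx => by
        refine ⟨by simpa using hx.1, ?_⟩
        rw [Nat.card_congr (stabilizerEquivStabilizer (g := c) (a := x) rfl).symm.toEquiv]
        exact hx.2 }
  refine frob_dvd_card (G := G) (X := Y) (m * p) fun y => ?_
  rw [SubMulAction.stabilizer_of_subMul]
  obtain ⟨h1, h2⟩ := y.2
  have h3 := frob_stab_dvd (y : Finset G)
  have h4 := (stabilizer G (y : Finset G)).card_mul_index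
  rw [h1] at h3
  obtain ⟨k, hk, hk'⟩ := (Nat.dvd_prime_pow hp).1 h3
  have hlt : k < r := lt_of_le_of_ne hk fun h => h2 (by rw [hk', h])
  rw [hk', hc] at h4
  obtain ⟨s, rfl⟩ := Nat.exists_eq_add_of_lt hlt
  refine ⟨p ^ s, ?_⟩
  apply Nat.eq_of_mul_eq_mul_left (pow_pos hp.pos k)
  rw [h4]; ring

theorem frob_good {G : Type*} [Group G] [Finite G] [DecidableEq G] (q m : ℕ) (hq : 0 < q)
    (hc : Nat.card G = q * m) :
    Nat.card {A : Finset G // A.card = q ∧ Nat.card (stabilizer G A) = q} =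
      Nat.card {Q : Subgroup G // Nat.card Q = q} * m := by
  classical
  have := Fintype.ofFinite G
  let GA := {A : Finset G // A.card = q ∧ Nat.card (stabilizer G A) = q}
  let f : (Σ A : GA, (A.1 : Finset G)) → {Q : Subgroup G // Nat.card Q = q} × G :=
    fun x => (⟨stabilizer G ((x.2 : G)⁻¹ • x.1.1), by
      rw [Nat.card_congr (stabilizerEquivStabilizer (g := (x.2 : G)⁻¹) (a := x.1.1) rfl).symm.toEquiv]
      exact x.1.2.2⟩, x.2)
  -- a good set containing one equals its stabilizer
  have key : ∀ B : Finset G, 1 ∈ B → B.card = q → Nat.card (stabilizer G B) = q →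
      ((stabilizer G B : Subgroup G) : Set G) = B := by
    intro B h1 h2 h3
    apply Set.eq_of_subset_of_ncard_le
    · intro c hc
      have := (mem_stabilizer_finset.1 hc 1).2 h1
      simpa using this
    · rw [Set.ncard_coe_finset, h2, ← h3]; exact le_of_eq (Nat.card_coe_set_eq _)
    · exact Set.toFinite _
  have keyx : ∀ x : (Σ A : GA, (A.1 : Finset G)),
      (((f x).1.1 : Subgroup G) : Set G) = (((x.2 : G)⁻¹ • x.1.1 : Finset G) : Set G) := by
    intro x
    apply key
    · exact Finset.mem_smul_finset.2 ⟨x.2, x.2.2, by simp⟩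
    · simpa using x.1.2.1
    · exact (f x).1.2
  have hf : Function.Bijective f := by
    constructor
    · intro x y hxy
      have hx := keyx x
      have hy := keyx y
      rw [hxy, hy] at hx
      have hg : (x.2 : G) = y.2 := congrArg Prod.snd hxy
      rw [Finset.coe_inj, hg] at hx
      have hA : x.1.1 = y.1.1 := (smul_left_cancel _ hx).symm
      obtain ⟨⟨A, hA1⟩, a, ha⟩ := x
      obtain ⟨⟨B, hB1⟩, b, hb⟩ := y
      simp only at hA hg
      subst hA
      subst hg
      rfl
    · rintro ⟨⟨K, hK⟩, g⟩
      let KF : Finset G := (K : Set G).toFinset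
      have hKF : stabilizer G KF = K := by
        rw [← stabilizer_coe_finset]; simp [KF]
      refine ⟨⟨⟨g • KF, ?_, ?_⟩, ⟨g, ?_⟩⟩, ?_⟩
      · rw [Finset.card_smul_finset, ← hK, ← Set.ncard_eq_toFinset_card']
        exact (Nat.card_coe_set_eq _).symm
      · rw [Nat.card_congr (stabilizerEquivStabilizer (g := g) (a := KF) rfl).symm.toEquiv, hKF, hK]
      · exact Finset.mem_smul_finset.2 ⟨1, by simp [KF, K.one_mem], by simp⟩
      · simp [f, hKF]
  have h := Nat.card_congr (Equiv.ofBijective f hf)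
  have := Fintype.ofFinite GA
  rw [Nat.card_sigma, Nat.card_prod, hc] at h
  have h2 : ∀ A : GA, Nat.card (A.1 : Finset G) = q := fun A => by
    rw [Nat.card_eq_fintype_card, Fintype.card_coe]; exact A.2.1
  simp only [h2, Finset.sum_const, smul_eq_mul, Finset.card_univ] at h
  rw [← Nat.card_eq_fintype_card] at h
  apply Nat.eq_of_mul_eq_mul_left hq
  change q * Nat.card GA = _
  linarith

/-- Frobenius' theorem: if `p ^ r` divides the order of a finite group `G`, then the
number of subgroups of `G` of order `p ^ r` is congruent to `1` mod `p`. -/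
theorem frobenius_subgroup_count {G : Type*} [Group G] [Fintype G] (p r : ℕ) (hp : p.Prime)
    (hdvd : p ^ r ∣ Fintype.card G) :
    Nat.card {Q : Subgroup G // Nat.card Q = p ^ r} ≡ 1 [MOD p] := by
  classical
  obtain ⟨m, hm⟩ := hdvd
  have hm0 : 0 < m := by
    rcases Nat.eq_zero_or_pos m with h | h
    · have := Fintype.card_pos (α := G)
      simp [hm, h] at this
    · exact h
  have hc : Nat.card G = p ^ r * m := by rw [Nat.card_eq_fintype_card, hm]
  have hb := frob_bad p r m hp hc
  have hg := frob_good (p ^ r) m (pow_pos hp.pos r) hc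
  have hch := frob_choose' p m hp hm0 r
  have htot : (p ^ r * m).choose (p ^ r) =
      Nat.card {A : Finset G // A.card = p ^ r ∧ Nat.card (stabilizer G A) = p ^ r} +
      Nat.card {A : Finset G // A.card = p ^ r ∧ Nat.card (stabilizer G A) ≠ p ^ r} := by
    rw [← hm, ← Finset.card_univ, ← Finset.card_powersetCard]
    rw [Nat.card_eq_fintype_card, Nat.card_eq_fintype_card, Fintype.card_subtype,
      Fintype.card_subtype, ← Finset.filter_filter, ← Finset.filter_filter,
      Finset.card_filter_add_card_filter_not]
    congr 1
    ext A
    simp [Finset.mem_powersetCard]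
  rw [htot, hg] at hch
  have h5 := (Nat.modEq_zero_iff_dvd.2 hb).add_left
    (Nat.card {Q : Subgroup G // Nat.card Q = p ^ r} * m)
  have h6 := h5.symm.trans hch
  rw [add_zero, mul_comm _ m] at h6
  exact Nat.ModEq.mul_left_cancel' hm0.ne' (by simpa using h6)
end

section
/- Let $G$ be a finite group whose order is divisible by a prime $p$. Then the number of elements of $G$ of order exactly $p$ is congruent to $-1$ modulo $p$. -/
open Equiv Equiv.Perm in
theorem card_pow_eq_one_dvd {G : Type*} [Group G] [Fintype G] [DecidableEq G] (p : ℕ)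
    [hp : Fact p.Prime] (hdvd : p ∣ Fintype.card G) :
    p ∣ (Finset.univ.filter (fun g : G => g ^ p = 1)).card := by
  classical
  have hp' : p - 1 ≠ 0 := mt tsub_eq_zero_iff_le.mp (not_le_of_gt hp.out.one_lt)
  have Scard : p ∣ Fintype.card (vectorsProdEqOne G p) := by
    rw [VectorsProdEqOne.card G p]
    exact hdvd.trans (dvd_pow (dvd_refl _) hp')
  let f : ℕ → vectorsProdEqOne G p → vectorsProdEqOne G p := fun k v =>
    VectorsProdEqOne.rotate v k
  have hf1 : ∀ v, f 0 v = v := VectorsProdEqOne.rotate_zero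
  have hf2 : ∀ j k v, f k (f j v) = f (j + k) v := fun j k v =>
    VectorsProdEqOne.rotate_rotate v j k
  have hf3 : ∀ v, f p v = v := VectorsProdEqOne.rotate_length
  let σ : Perm (vectorsProdEqOne G p) :=
    Equiv.mk (f 1) (f (p - 1)) (fun s => by rw [hf2, add_tsub_cancel_of_le hp.out.one_lt.le, hf3])
      fun s => by rw [hf2, tsub_add_cancel_of_le hp.out.one_lt.le, hf3]
  have hσ : ∀ k v, (σ ^ k) v = f k v := fun k =>
    Nat.rec (fun v => (hf1 v).symm) (fun k hk v => by
      rw [pow_succ, Perm.mul_apply, hk (σ v), Nat.succ_eq_one_add, ← hf2 1 k]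
      simp only [σ, coe_fn_mk]) k
  replace hσ : σ ^ p ^ 1 = 1 := Perm.ext fun v => by rw [pow_one, hσ, hf3, one_apply]
  have h1 : p ∣ σ.supportᶜ.card := Nat.modEq_zero_iff_dvd.mp
    ((card_compl_support_modEq hσ).trans (Nat.modEq_zero_iff_dvd.mpr Scard))
  have h2 : (Finset.univ.filter (fun g : G => g ^ p = 1)).card = σ.supportᶜ.card := by
    refine Finset.card_bij (fun g hg => ⟨List.Vector.replicate p g,
      (List.prod_replicate p g).trans (Finset.mem_filter.mp hg).2⟩) ?_ ?_ ?_
    · intro g hg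
      rw [Finset.mem_compl, mem_support, Classical.not_not]
      exact Subtype.ext (Subtype.ext (List.rotate_replicate g p 1))
    · intro a ha b hb h
      have h' : List.replicate p a = List.replicate p b :=
        Subtype.ext_iff.mp (Subtype.ext_iff.mp h)
      exact (List.replicate_right_inj hp.out.ne_zero).mp h'
    · intro v hv
      rw [Finset.mem_compl, mem_support, Classical.not_not] at hv
      obtain ⟨g, hg⟩ :=
        List.rotate_one_eq_self_iff_eq_replicate.mp (Subtype.ext_iff.mp (Subtype.ext_iff.mp hv))
      refine ⟨g, ?_, ?_⟩
      · rw [Finset.mem_filter]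
        refine ⟨Finset.mem_univ _, ?_⟩
        rw [← List.prod_replicate, ← v.1.2, ← hg, show v.val.val.prod = 1 from v.2]
      · refine Subtype.ext (Subtype.ext ?_)
        exact (hg.trans (congrArg (fun n => List.replicate n g) v.1.2)).symm
  rw [h2]
  exact h1

/-- If a prime `p` divides the order of a finite group `G`, then the number of elements of
`G` of order exactly `p` is congruent to `-1` mod `p`. -/
theorem count_elements_order_p {G : Type*} [Group G] [Fintype G] (p : ℕ) (hp : p.Prime)
    (hdvd : p ∣ Fintype.card G) :
    (Nat.card {g : G // orderOf g = p} : ZMod p) = -1 := by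
  classical
  haveI : Fact p.Prime := ⟨hp⟩
  have h := card_pow_eq_one_dvd p hdvd
  have h2 : (Finset.univ.filter (fun g : G => g ^ p = 1))
      = insert 1 (Finset.univ.filter (fun g : G => orderOf g = p)) := by
    ext g
    simp only [Finset.mem_filter, Finset.mem_univ, true_and, Finset.mem_insert]
    rw [← orderOf_dvd_iff_pow_eq_one, Nat.dvd_prime hp, orderOf_eq_one_iff]
  rw [h2, Finset.card_insert_of_notMem (by simp [hp.ne_one.symm])] at h
  rw [Nat.card_eq_fintype_card, Fintype.card_subtype, eq_neg_iff_add_eq_zero]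
  exact_mod_cast (ZMod.natCast_eq_zero_iff _ p).mpr h
end

section
/- Let $H$ be a finite group of order $M$, let $p$ be a prime with $p^n \mid M$ and $p^{n+1} \nmid M$, and let $0 \le r \le n$. Let $P_r$ be a subgroup of $H$ of order $p^r$. Then the number of ordered tuples $(P_{r+1}, P_{r+2}, \ldots, P_n)$ of subgroups of $H$ with $|P_i| = p^i$ for each $i$ and $P_r \le P_{r+1} \le \cdots \le P_n \le H$ is congruent to $1$ modulo $p$. -/
theorem aux_mckay {G : Type*} [Group G] [Finite G] (p : ℕ) (hp : p.Prime)
    (hdvd : p ∣ Nat.card G) : p ∣ Nat.card {x : G // x ^ p = 1} := by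
  classical
  have := Fintype.ofFinite G
  have : Fact p.Prime := ⟨hp⟩
  let f : Function.End (Equiv.Perm.vectorsProdEqOne G p) :=
    fun v => Equiv.Perm.VectorsProdEqOne.rotate v 1
  have hf : ∀ k v, (f ^ k) v = Equiv.Perm.VectorsProdEqOne.rotate v k := by
    intro k
    induction k with
    | zero => intro v; exact (Equiv.Perm.VectorsProdEqOne.rotate_zero v).symm
    | succ k ih =>
      intro v
      rw [pow_succ]
      change (f ^ k) (f v) = _
      rw [ih, Equiv.Perm.VectorsProdEqOne.rotate_rotate, add_comm]
  have hf' : f ^ p ^ 1 = 1 := by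
    funext v
    rw [pow_one, hf, Equiv.Perm.VectorsProdEqOne.rotate_length]; rfl
  have h1 := Equiv.Perm.card_fixedPoints_modEq hf'
  rw [Equiv.Perm.VectorsProdEqOne.card] at h1
  have h2 : Nat.card {x : G // x ^ p = 1} = Nat.card f.fixedPoints := by
    refine Nat.card_eq_of_bijective (fun x => ⟨⟨List.Vector.replicate p x.1, ?_⟩, ?_⟩) ⟨?_, ?_⟩
    · exact (List.prod_replicate p x.1).trans x.2
    · exact Subtype.ext (Subtype.ext (List.rotate_replicate x.1 p 1))
    · intro x y h
      have h' : List.replicate p x.1 = List.replicate p y.1 :=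
        congrArg (fun v => v.1.1.1) h
      exact Subtype.ext ((List.replicate_right_inj hp.ne_zero).1 h')
    · rintro ⟨v, hv⟩
      have hv' : v.1.1.rotate 1 = v.1.1 := congrArg (fun v => v.1.1) hv
      obtain ⟨g, hg⟩ := List.rotate_one_eq_self_iff_eq_replicate.mp hv'
      have hl : v.1.1.length = p := v.1.2
      rw [hl] at hg
      refine ⟨⟨g, ?_⟩, ?_⟩
      · rw [← List.prod_replicate, ← hg]; exact v.2
      · exact Subtype.ext (Subtype.ext (Subtype.ext hg.symm))
  rw [h2, Nat.card_eq_fintype_card]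
  refine (Nat.modEq_zero_iff_dvd.1 (h1.symm.trans (Nat.modEq_zero_iff_dvd.2 ?_)))
  rw [Nat.card_eq_fintype_card] at hdvd
  exact hdvd.trans (dvd_pow_self _ (by have := hp.two_le; omega))

theorem aux_order_p {G : Type*} [Group G] [Finite G] (p : ℕ) (hp : p.Prime)
    (hdvd : p ∣ Nat.card G) : Nat.card {K : Subgroup G // Nat.card K = p} ≡ 1 [MOD p] := by
  classical
  have : Fact p.Prime := ⟨hp⟩
  have h := aux_mckay p hp hdvd
  let e : {x : G // x ^ p = 1} ≃
      Option (Σ K : {K : Subgroup G // Nat.card K = p}, {x : K.1 // x ≠ 1}) :=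
    { toFun := fun x => if hx : x.1 = 1 then none else
        some ⟨⟨Subgroup.zpowers x.1, by
          rw [Nat.card_zpowers]; exact orderOf_eq_prime x.2 hx⟩,
          ⟨⟨x.1, Subgroup.mem_zpowers _⟩, by simpa [Subtype.ext_iff] using hx⟩⟩
      invFun := fun o => match o with
        | none => ⟨1, one_pow _⟩
        | some s => ⟨s.2.1.1, by
          have := pow_card_eq_one' (x := s.2.1)
          rw [s.1.2] at this
          exact congrArg Subtype.val this⟩
      left_inv := by
        rintro ⟨x, hx⟩
        by_cases h1 : x = 1
        · subst h1; simp
        · simp [h1]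
      right_inv := by
        rintro (_ | ⟨⟨K, hK⟩, ⟨⟨x, hxK⟩, hx⟩⟩)
        · simp
        · have hx1 : x ≠ 1 := fun h => hx (Subtype.ext h)
          have hxp : x ^ p = 1 := by
            have := pow_card_eq_one' (x := (⟨x, hxK⟩ : K))
            rw [hK] at this
            exact congrArg Subtype.val this
          have hz : Subgroup.zpowers x = K := by
            apply Subgroup.eq_of_le_of_card_ge (by simpa using hxK)
            rw [hK, Nat.card_zpowers, orderOf_eq_prime hxp hx1]
          subst hz
          simp [hx1] }
  have := Fintype.ofFinite {K : Subgroup G // Nat.card K = p}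
  rw [Nat.card_congr e, Finite.card_option, Nat.card_sigma] at h
  have h3 : ∀ K : {K : Subgroup G // Nat.card K = p}, Nat.card {x : K.1 // x ≠ 1} = p - 1 := by
    intro K
    have := Fintype.ofFinite K.1
    rw [Nat.card_eq_fintype_card, Fintype.card_subtype_compl, Fintype.card_subtype_eq,
      ← Nat.card_eq_fintype_card, K.2]
  simp only [h3, Finset.sum_const, smul_eq_mul, Finset.card_univ] at h
  rw [← Nat.card_eq_fintype_card] at h
  generalize Nat.card {K : Subgroup G // Nat.card K = p} = s at *
  obtain ⟨q, rfl⟩ : ∃ q, p = q + 1 := ⟨p - 1, by have := hp.two_le; omega⟩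
  simp only [Nat.add_sub_cancel] at h
  rw [Nat.modEq_iff_dvd]
  have h5 : ((q + 1 : ℕ) : ℤ) ∣ ((s * q + 1 : ℕ) : ℤ) := Int.natCast_dvd_natCast.2 h
  have h6 : ((1 : ℕ) : ℤ) - s = ((s * q + 1 : ℕ) : ℤ) - ((q + 1 : ℕ) : ℤ) * s := by
    push_cast; ring
  rw [h6]
  exact dvd_sub h5 (dvd_mul_right _ _)

theorem aux_step {H : Type*} [Group H] [Finite H] (p r : ℕ) (hp : p.Prime)
    (hdvd : p ^ (r + 1) ∣ Nat.card H) (P : Subgroup H) (hP : Nat.card P = p ^ r) :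
    Nat.card {K : Subgroup H // Nat.card K = p ^ (r + 1) ∧ P ≤ K} ≡ 1 [MOD p] := by
  classical
  have : Fact p.Prime := ⟨hp⟩
  have hd := Sylow.prime_dvd_card_quotient_normalizer hdvd hP
  let N : Subgroup H := Subgroup.normalizer (P : Set H)
  let P' : Subgroup N := P.subgroupOf N
  have hnorm : P'.Normal := inferInstanceAs (P.subgroupOf (Subgroup.normalizer (P : Set H))).Normal
  have hPN : P ≤ N := Subgroup.le_normalizer
  have hP' : Nat.card P' = p ^ r := by
    rw [← hP]; exact Nat.card_congr (Subgroup.subgroupOfEquivOfLe hPN).toEquiv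
  have key := aux_order_p (G := N ⧸ P') p hp hd
  have hcard : ∀ L : Subgroup (N ⧸ P'),
      Nat.card ((L.comap (QuotientGroup.mk' P')).map N.subtype) = p ^ r * Nat.card L := by
    intro L
    rw [Subgroup.card_map_of_injective N.subtype_injective, ← hP', ← Nat.card_prod]
    exact Nat.card_congr (QuotientGroup.preimageMkEquivSubgroupProdSet P' L)
  have hpos : 0 < p ^ r := pow_pos hp.pos r
  refine Nat.ModEq.trans (congrArg (· % p) ?_) key
  symm
  refine Nat.card_eq_of_bijective (fun L => ⟨(L.1.comap (QuotientGroup.mk' P')).map N.subtype,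
    ?_, ?_⟩) ⟨?_, ?_⟩
  · rw [hcard, L.2, pow_succ]
  · intro x hx
    refine ⟨⟨x, hPN hx⟩, QuotientGroup.le_comap_mk' P' L.1 ?_, rfl⟩
    exact hx
  · intro L L' h
    have h' := congrArg Subtype.val h
    exact Subtype.ext (Subgroup.comap_injective (QuotientGroup.mk'_surjective P')
      (Subgroup.map_injective N.subtype_injective h'))
  · rintro ⟨K, hK, hPK⟩
    have hKN : K ≤ N := by
      have hn : (P.subgroupOf K).Normal := by
        apply Subgroup.normal_of_index_eq_minFac_card
        rw [hK, hp.pow_minFac (Nat.succ_ne_zero r)]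
        have h1 := (P.subgroupOf K).card_mul_index
        rw [Nat.card_congr (Subgroup.subgroupOfEquivOfLe hPK).toEquiv, hP, hK, pow_succ] at h1
        exact Nat.eq_of_mul_eq_mul_left hpos h1
      exact Subgroup.le_normalizer_of_normal_subgroupOf hPK
    have hL : (((K.subgroupOf N).map (QuotientGroup.mk' P')).comap
        (QuotientGroup.mk' P')).map N.subtype = K := by
      rw [QuotientGroup.comap_map_mk', sup_eq_right.2, Subgroup.subgroupOf_map_subtype,
        inf_eq_left.2 hKN]
      exact Subgroup.comap_mono hPK
    refine ⟨⟨(K.subgroupOf N).map (QuotientGroup.mk' P'), ?_⟩, Subtype.ext hL⟩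
    have h1 := hcard ((K.subgroupOf N).map (QuotientGroup.mk' P'))
    rw [hL, hK, pow_succ] at h1
    exact (Nat.eq_of_mul_eq_mul_left hpos h1).symm

theorem aux_chain {H : Type*} [Group H] [Finite H] (p : ℕ) (hp : p.Prime) (k : ℕ) :
    ∀ (r : ℕ) (_ : p ^ (r + k) ∣ Nat.card H) (P : Subgroup H) (_ : Nat.card P = p ^ r),
    Nat.card {Q : Fin k → Subgroup H //
        Monotone Q ∧ (∀ i : Fin k, Nat.card (Q i) = p ^ (r + 1 + (i : ℕ))) ∧
          ∀ i : Fin k, P ≤ Q i} ≡ 1 [MOD p] := by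
  classical
  induction k with
  | zero =>
    intro r _ P _
    have : Nat.card {Q : Fin 0 → Subgroup H //
        Monotone Q ∧ (∀ i : Fin 0, Nat.card (Q i) = p ^ (r + 1 + (i : ℕ))) ∧
          ∀ i : Fin 0, P ≤ Q i} = 1 := by
      rw [Nat.card_eq_one_iff_unique]
      exact ⟨inferInstance, ⟨⟨Fin.elim0, fun i => i.elim0, fun i => i.elim0, fun i => i.elim0⟩⟩⟩
    rw [this]
  | succ k ih =>
    intro r hd P hP
    let e : {Q : Fin (k + 1) → Subgroup H //
        Monotone Q ∧ (∀ i : Fin (k + 1), Nat.card (Q i) = p ^ (r + 1 + (i : ℕ))) ∧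
          ∀ i : Fin (k + 1), P ≤ Q i} ≃
        Σ K : {K : Subgroup H // Nat.card K = p ^ (r + 1) ∧ P ≤ K},
          {Q : Fin k → Subgroup H //
            Monotone Q ∧ (∀ i : Fin k, Nat.card (Q i) = p ^ (r + 1 + 1 + (i : ℕ))) ∧
            ∀ i : Fin k, K.1 ≤ Q i} :=
      { toFun := fun Q => ⟨⟨Q.1 0, Q.2.2.1 0, Q.2.2.2 0⟩, ⟨fun i => Q.1 i.succ,
          fun i j h => Q.2.1 (Fin.succ_le_succ_iff.2 h),
          fun i => by rw [Q.2.2.1, Fin.val_succ]; congr 1; ring,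
          fun i => Q.2.1 (Fin.zero_le _)⟩⟩
        invFun := fun s => ⟨Fin.cons s.1.1 s.2.1, by
          intro i j h
          induction i using Fin.cases with
          | zero =>
            induction j using Fin.cases with
            | zero => exact le_rfl
            | succ j => exact s.2.2.2.2 j
          | succ i =>
            induction j using Fin.cases with
            | zero => exact absurd h (by simp)
            | succ j => exact s.2.2.1 (Fin.succ_le_succ_iff.1 h), by
          intro i
          induction i using Fin.cases with
          | zero => exact s.1.2.1
          | succ i =>
            rw [Fin.cons_succ, s.2.2.2.1, Fin.val_succ]; congr 1; ring, by
          intro i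
          induction i using Fin.cases with
          | zero => exact s.1.2.2
          | succ i => exact s.1.2.2.trans (s.2.2.2.2 i)⟩
        left_inv := by
          rintro ⟨Q, hQ⟩
          apply Subtype.ext
          exact Fin.cons_self_tail Q
        right_inv := by
          rintro ⟨⟨K, hK⟩, ⟨Q, hQ⟩⟩
          rfl }
    have := Fintype.ofFinite {K : Subgroup H // Nat.card K = p ^ (r + 1) ∧ P ≤ K}
    rw [Nat.card_congr e, Nat.card_sigma]
    have h1 := aux_step p r hp ((pow_dvd_pow p (by omega)).trans hd) P hP
    refine Nat.ModEq.trans ?_ h1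
    rw [Nat.card_eq_fintype_card, Fintype.card_eq_sum_ones]
    refine Nat.ModEq.sum fun K _ => ?_
    exact ih (r + 1) (by rwa [add_assoc, add_comm 1 k]) K.1 K.2.1


/-- Let `H` be a finite group with `p ^ n ∣ |H|` and `p ^ (n + 1) ∤ |H|`, let `r ≤ n`,
and let `Pr ≤ H` have order `p ^ r`. Then the number of ascending chains
`Pr ≤ P (r+1) ≤ ⋯ ≤ P n` of subgroups of `H` with `|P i| = p ^ i` is congruent to `1`
mod `p`. The tuple `(P (r+1), …, P n)` is encoded as a monotone `Q : Fin (n - r) → Subgroup H`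
with `|Q i| = p ^ (r + 1 + i)`. -/
theorem chain_count_to_sylow {H : Type*} [Group H] [Fintype H] (p n r : ℕ) (hp : p.Prime)
    (hn : p ^ n ∣ Fintype.card H) (hn' : ¬ p ^ (n + 1) ∣ Fintype.card H) (hr : r ≤ n)
    (Pr : Subgroup H) (hPr : Nat.card Pr = p ^ r) :
    Nat.card {Q : Fin (n - r) → Subgroup H //
        Monotone Q ∧ (∀ i : Fin (n - r), Nat.card (Q i) = p ^ (r + 1 + (i : ℕ))) ∧
          ∀ i : Fin (n - r), Pr ≤ Q i}
      ≡ 1 [MOD p] := by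
  refine aux_chain p hp (n - r) r ?_ Pr hPr
  rwa [Nat.add_sub_cancel' hr, Nat.card_eq_fintype_card]
end
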